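/- Let λ have block structure k and let γ be a face of the ladder diagram Γ_k. Define the point x̄ = (x̄_{i,j}) ∈ ℝ^d recursively by: x̄_{i,n+1−i} = λ_i for 1 ≤ i ≤ n, and for (i,j) ∈ I with i+j ≤ n−1 (given x̄_{i,j+1} and x̄_{i+1,j}): x̄_{i,j} = x̄_{i,j+1} if ((i−1,j),(i,j)) is not an edge of γ; x̄_{i,j} = x̄_{i+1,j} if ((i−1,j),(i,j)) is an edge of γ but ((i,j−1),(i,j)) is not; and x̄_{i,j} = (x̄_{i,j+1}+x̄_{i+1,j})/2 if both ((i−1,j),(i,j)) and ((i,j−1),(i,j)) are edges of γ. Then x̄ ∈ P_λ, and for every (i,j) ∈ I one has: x̄_{i,j} < x̄_{i,j+1} if and only if ((i−1,j),(i,j)) is an edge of γ, and x̄_{i,j} > x̄_{i+1,j} if and only if ((i,j−1),(i,j)) is an edge of γ. -/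

import Mathlib

open Classical

noncomputable section

/-- Partial sums of the (0-indexed) sequence `k`: `nseq k i = k 0 + ⋯ + k (i-1)`;
so `nseq k i` is the paper's `n_i` for the sequence `(k_1, …, k_s) = (k 0, …, k (s-1))`. -/
def nseq (k : ℕ → ℕ) (i : ℕ) : ℕ := ∑ j ∈ Finset.range i, k j

/-- The set of terminal vertices `T_k = {(n_i, n - n_i) : 0 ≤ i ≤ s}` of the ladder diagram. -/
def terminals (s : ℕ) (k : ℕ → ℕ) : Set (ℕ × ℕ) :=
  {v | ∃ i ≤ s, v = (nseq k i, nseq k s - nseq k i)}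

/-- The vertex set of the ladder diagram `Γ_k`. -/
def ladderV (s : ℕ) (k : ℕ → ℕ) : Set (ℕ × ℕ) :=
  {v | ∃ t ∈ terminals s k, v.1 ≤ t.1 ∧ v.2 ≤ t.2}

/-- A unit grid step: one step to the right or one step up. -/
def gridStep (v w : ℕ × ℕ) : Prop :=
  w = (v.1 + 1, v.2) ∨ w = (v.1, v.2 + 1)

/-- The edge set of the ladder diagram `Γ_k`. -/
def ladderE (s : ℕ) (k : ℕ → ℕ) : Set ((ℕ × ℕ) × (ℕ × ℕ)) :=
  {e | e.1 ∈ ladderV s k ∧ e.2 ∈ ladderV s k ∧ gridStep e.1 e.2}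

/-- A combinatorial (directed) graph in the grid `ℤ_{≥0} × ℤ_{≥0}`,
given by a set of vertices and a set of edges. -/
@[ext] structure LGraph where
  V : Set (ℕ × ℕ)
  E : Set ((ℕ × ℕ) × (ℕ × ℕ))

/-- Subgraph inclusion order on grid graphs. -/
instance : PartialOrder LGraph where
  le γ γ' := γ.V ⊆ γ'.V ∧ γ.E ⊆ γ'.E
  le_refl γ := ⟨subset_rfl, subset_rfl⟩
  le_trans a b c h h' := ⟨h.1.trans h'.1, h.2.trans h'.2⟩
  le_antisymm a b h h' := LGraph.ext (subset_antisymm h.1 h'.1) (subset_antisymm h.2 h'.2)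

/-- The ladder diagram `Γ_k` as a grid graph. -/
def ladder (s : ℕ) (k : ℕ → ℕ) : LGraph :=
  ⟨ladderV s k, ladderE s k⟩

/-- A positive path: (the graph of) a shortest path in the ladder diagram `Γ_k`
from the origin `(0,0)` to a terminal vertex. -/
def IsPositivePath (s : ℕ) (k : ℕ → ℕ) (p : LGraph) : Prop :=
  ∃ (m : ℕ) (f : ℕ → ℕ × ℕ),
    f 0 = (0, 0) ∧ f m ∈ terminals s k ∧
    (∀ i < m, gridStep (f i) (f (i + 1))) ∧
    (∀ i ≤ m, f i ∈ ladderV s k) ∧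
    p.V = {v | ∃ i ≤ m, v = f i} ∧
    p.E = {e | ∃ i < m, e = (f i, f (i + 1))}

/-- A face of the ladder diagram `Γ_k`: a subgraph which contains all terminal
vertices and is a union of positive paths. -/
def IsLadderFace (s : ℕ) (k : ℕ → ℕ) (γ : LGraph) : Prop :=
  terminals s k ⊆ γ.V ∧
  ∃ P : Set LGraph, (∀ p ∈ P, IsPositivePath s k p) ∧
    γ.V = ⋃ p ∈ P, LGraph.V p ∧ γ.E = ⋃ p ∈ P, LGraph.E p

/-- The dimension (first Betti number) of a face of a ladder diagram:
`|E(γ)| - |V(γ)| + 1`. -/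
def ldim (γ : LGraph) : ℤ :=
  (γ.E.ncard : ℤ) - (γ.V.ncard : ℤ) + 1

/-- The index set `I = {(i,j) : i,j ≥ 1, i+j ≤ n}` of the coordinates of a
Gelfand–Cetlin pattern. -/
def GCIdx (n : ℕ) : Set (ℕ × ℕ) := {p | 1 ≤ p.1 ∧ 1 ≤ p.2 ∧ p.1 + p.2 ≤ n}

/-- The entries of a Gelfand–Cetlin pattern `x`, extended by the boundary
condition `x_{i, n+1-i} = λ_i`. -/
def gcEntry (n : ℕ) (lam : ℕ → ℝ) (x : GCIdx n → ℝ) (p : ℕ × ℕ) : ℝ :=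
  if h : p ∈ GCIdx n then x ⟨p, h⟩ else lam p.1

/-- The Gelfand–Cetlin polytope `P_λ`: the set of points `(x_{i,j})_{(i,j) ∈ I}`
with `x_{i,j+1} ≥ x_{i,j} ≥ x_{i+1,j}` for all `(i,j) ∈ I`, where
`x_{i,n+1-i} = λ_i`. -/
def GCPoly (n : ℕ) (lam : ℕ → ℝ) : Set (GCIdx n → ℝ) :=
  {x | ∀ i j : ℕ, (i, j) ∈ GCIdx n →
    gcEntry n lam x (i, j) ≤ gcEntry n lam x (i, j + 1) ∧
    gcEntry n lam x (i + 1, j) ≤ gcEntry n lam x (i, j)}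

/-- The subset of `P_λ` obtained by turning the inequalities
`x_{i,j+1} ≥ x_{i,j}` for `(i,j) ∈ SH` and `x_{i,j} ≥ x_{i+1,j}` for
`(i,j) ∈ SV` into equalities. -/
def GCFaceOf (n : ℕ) (lam : ℕ → ℝ) (SH SV : Set (ℕ × ℕ)) : Set (GCIdx n → ℝ) :=
  {x | x ∈ GCPoly n lam ∧
    (∀ p ∈ SH, gcEntry n lam x (p.1, p.2 + 1) = gcEntry n lam x p) ∧
    (∀ p ∈ SV, gcEntry n lam x p = gcEntry n lam x (p.1 + 1, p.2))}

/-- A face of the GC polytope: a nonempty solution set of the system obtained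
by replacing some of the defining inequalities by equalities. -/
def IsGCFace (n : ℕ) (lam : ℕ → ℝ) (F : Set (GCIdx n → ℝ)) : Prop :=
  F.Nonempty ∧ ∃ SH SV : Set (ℕ × ℕ), SH ⊆ GCIdx n ∧ SV ⊆ GCIdx n ∧
    F = GCFaceOf n lam SH SV

/-- The dimension of (a face of) the GC polytope: the dimension of its affine span. -/
def GCdim (n : ℕ) (F : Set (GCIdx n → ℝ)) : ℕ :=
  Module.finrank ℝ (affineSpan ℝ F).direction

/-- `lam` (1-indexed) is weakly decreasing with block structure `k`: it is
constant on each block `(n_{i-1}, n_i]` and strictly decreases between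
consecutive blocks. -/
def HasBlockStructure (s : ℕ) (k : ℕ → ℕ) (lam : ℕ → ℝ) : Prop :=
  (∀ i < s, ∀ a b : ℕ, nseq k i < a → a ≤ b → b ≤ nseq k (i + 1) → lam a = lam b) ∧
  (∀ i : ℕ, 1 ≤ i → i < s → lam (nseq k i + 1) < lam (nseq k i))

/-- The edge set of the graph `φ(F)` associated to a subset `F` of the GC polytope. -/
def phiE (n : ℕ) (lam : ℕ → ℝ) (F : Set (GCIdx n → ℝ)) :
    Set ((ℕ × ℕ) × (ℕ × ℕ)) :=
  {e | (∃ i < n, e = ((0, i), (0, i + 1)) ∨ e = ((i, 0), (i + 1, 0))) ∨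
    (∃ i j : ℕ, (i, j) ∈ GCIdx n ∧ e = ((i - 1, j), (i, j)) ∧
      ∃ x ∈ F, gcEntry n lam x (i, j) < gcEntry n lam x (i, j + 1)) ∨
    (∃ i j : ℕ, (i, j) ∈ GCIdx n ∧ e = ((i, j - 1), (i, j)) ∧
      ∃ x ∈ F, gcEntry n lam x (i + 1, j) < gcEntry n lam x (i, j))}

/-- The graph `φ(F)`: its edges are given by `phiE` and its vertices are the
endpoints of its edges. -/
def phiGC (n : ℕ) (lam : ℕ → ℝ) (F : Set (GCIdx n → ℝ)) : LGraph where
  V := {v | ∃ e ∈ phiE n lam F, v = e.1 ∨ v = e.2}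
  E := phiE n lam F

/-- The map `ψ`: for a subgraph `γ`, the set of points of `P_λ` where the
inequalities corresponding to the missing edges of `γ` become equalities. -/
def psiGC (n : ℕ) (lam : ℕ → ℝ) (γ : LGraph) : Set (GCIdx n → ℝ) :=
  {x | x ∈ GCPoly n lam ∧ ∀ i j : ℕ, (i, j) ∈ GCIdx n →
    (((i - 1, j), (i, j)) ∉ γ.E → gcEntry n lam x (i, j) = gcEntry n lam x (i, j + 1)) ∧
    (((i, j - 1), (i, j)) ∉ γ.E → gcEntry n lam x (i, j) = gcEntry n lam x (i + 1, j))}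
/-- The recursively defined point `x̄` of the proof of Lemma 2.6 (bijectivity):
`x̄_{i,j} = λ_i` if `i + j = n + 1`, and for `i + j ≤ n` it is determined from
`x̄_{i,j+1}` and `x̄_{i+1,j}` according to which of the two edges
`((i-1,j),(i,j))`, `((i,j-1),(i,j))` belong to `E`. -/
def barX (n : ℕ) (lam : ℕ → ℝ) (E : Set ((ℕ × ℕ) × (ℕ × ℕ))) : ℕ → ℕ → ℝ
  | i, j =>
    if h1 : n + 1 ≤ i + j then lam i
    else if h2 : ((i - 1, j), (i, j)) ∈ E then
      if h3 : ((i, j - 1), (i, j)) ∈ E then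
        (barX n lam E i (j + 1) + barX n lam E (i + 1) j) / 2
      else barX n lam E (i + 1) j
    else barX n lam E i (j + 1)
  termination_by i j => n + 1 - (i + j)
  decreasing_by all_goals omega

/-- `α, β : ℕ → ℕ` encode an element
`w = ((α_1,β_1),…,(α_{s-1},β_{s-1})) ∈ W_{s-1}`, with the conventions
`α_0 = 0`, `β_0 = 1`, `α_s = 1`, `β_s = 0`. -/
def IsW (s : ℕ) (α β : ℕ → ℕ) : Prop :=
  (∀ i : ℕ, 1 ≤ i → i < s →
    (α i, β i) = (1, 0) ∨ (α i, β i) = (0, 1) ∨ (α i, β i) = (1, 1)) ∧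
  α 0 = 0 ∧ β 0 = 1 ∧ α s = 1 ∧ β s = 0

/-- The edge set of the subgraph `g_w` of `Γ_k`: the horizontal edge into the
terminal vertex `v_i` when `α_i = 1` and the vertical edge into `v_i` when
`β_i = 1`. -/
def gwE (s : ℕ) (k α β : ℕ → ℕ) : Set ((ℕ × ℕ) × (ℕ × ℕ)) :=
  {e | ∃ i ≤ s,
    (α i = 1 ∧
      e = ((nseq k i - 1, nseq k s - nseq k i), (nseq k i, nseq k s - nseq k i))) ∨
    (β i = 1 ∧
      e = ((nseq k i, nseq k s - nseq k i - 1), (nseq k i, nseq k s - nseq k i)))}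

/-- The subgraph `g_w` of `Γ_k`. -/
def gwGraph (s : ℕ) (k α β : ℕ → ℕ) : LGraph where
  V := {v | ∃ e ∈ gwE s k α β, v = e.1 ∨ v = e.2}
  E := gwE s k α β

/-- The interleaved sequence `r_w(k) * w̃` of length `2s - 1` (0-indexed):
entry `2j` is `k''_{j+1} = k_{j+1} + 1 - α_{j+1} - β_j` and entry `2j + 1` is
`w̃_{j+1} = α_{j+1} β_{j+1}`. -/
def rstar (s : ℕ) (k α β : ℕ → ℕ) (t : ℕ) : ℕ :=
  if t % 2 = 0 then k (t / 2) + 1 - α (t / 2 + 1) - β (t / 2)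
  else α (t / 2 + 1) * β (t / 2 + 1)

/-- `α`-value of one of the three symbols `(1,0), (0,1), (1,1)`,
encoded as `0, 1, 2 : Fin 3` respectively. -/
def aW3 (c : Fin 3) : ℕ := if c = 1 then 0 else 1

/-- `β`-value of one of the three symbols `(1,0), (0,1), (1,1)`,
encoded as `0, 1, 2 : Fin 3` respectively. -/
def bW3 (c : Fin 3) : ℕ := if c = 0 then 0 else 1

/-- The function `α` of the element of `W_{s-1}` encoded by
`c : Fin (s-1) → Fin 3` (with the conventions `α_0 = 0`, `α_s = 1`). -/
def alph (s : ℕ) (c : Fin (s - 1) → Fin 3) (i : ℕ) : ℕ :=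
  if i = 0 then 0 else if h : i - 1 < s - 1 then aW3 (c ⟨i - 1, h⟩) else 1

/-- The function `β` of the element of `W_{s-1}` encoded by
`c : Fin (s-1) → Fin 3` (with the conventions `β_0 = 1`, `β_s = 0`). -/
def bet (s : ℕ) (c : Fin (s - 1) → Fin 3) (i : ℕ) : ℕ :=
  if i = 0 then 1 else if h : i - 1 < s - 1 then bW3 (c ⟨i - 1, h⟩) else 0

/-- The interleaved sequence `r_w(k) * w̃` (of length `2s - 1`, 0-indexed) for
the element `w ∈ W_{s-1}` encoded by `c`. -/
def newk (s : ℕ) (c : Fin (s - 1) → Fin 3) (k : ℕ → ℕ) (t : ℕ) : ℕ :=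
  if t % 2 = 0 then k (t / 2) + 1 - alph s c (t / 2 + 1) - bet s c (t / 2)
  else alph s c (t / 2 + 1) * bet s c (t / 2 + 1)

/-- `|w| = Σ_{i=1}^{s-1} α_i β_i` for the element `w ∈ W_{s-1}` encoded by `c`. -/
def wsize (s : ℕ) (c : Fin (s - 1) → Fin 3) : ℕ :=
  ∑ j ∈ Finset.range (s - 1), alph s c (j + 1) * bet s c (j + 1)

/-- The subgraph `g_w` of `Γ_k` for the element `w ∈ W_{s-1}` encoded by `c`. -/
def gwGraph3 (s : ℕ) (k : ℕ → ℕ) (c : Fin (s - 1) → Fin 3) : LGraph :=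
  gwGraph s k (alph s c) (bet s c)

/-- Union of two grid graphs (union of vertex sets and of edge sets). -/
def ugraph (γ δ : LGraph) : LGraph := ⟨γ.V ∪ δ.V, γ.E ∪ δ.E⟩

/-- The generating function `F_k(t) = Σ_{γ face of Γ_k} t^{dim γ}` of the
`f`-vector of the ladder diagram `Γ_k`, as a formal power series in `t`:
the coefficient of `t^d` is the number of faces of `Γ_k` of dimension `d`. -/
def fpol (s : ℕ) (k : ℕ → ℕ) : PowerSeries ℤ :=
  PowerSeries.mk fun d =>
    (Set.ncard {γ : LGraph | IsLadderFace s k γ ∧ ldim γ = (d : ℤ)} : ℤ)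

/-- The operator `Π_{i=1}^{s-1} (∂/∂x_i + ∂/∂x_{i+1} + t ∂/∂y_i)` applied to a
polynomial in the variables `x_1, x_2, … , y_1, y_2, …` (the variable `x_{i+1}`
is `Sum.inl i` and `y_{i+1}` is `Sum.inr i`) over `ℚ[t]`. -/
def Lfold (s : ℕ) (f : MvPolynomial (ℕ ⊕ ℕ) (Polynomial ℚ)) :
    MvPolynomial (ℕ ⊕ ℕ) (Polynomial ℚ) :=
  (List.range (s - 1)).foldl
    (fun g i =>
      MvPolynomial.pderiv (Sum.inl i) g + MvPolynomial.pderiv (Sum.inl (i + 1)) g +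
        (Polynomial.X : Polynomial ℚ) • MvPolynomial.pderiv (Sum.inr i) g) f

/-- The operator `D_w = Π_{i=1}^{s-1} (∂/∂x_i)^{1-α_i} (∂/∂x_{i+1})^{1-β_i}
(t ∂/∂y_i)^{α_i β_i}` for the element `w ∈ W_{s-1}` encoded by
`c : Fin (s-1) → Fin 3` (`0 ↦ (1,0)`, `1 ↦ (0,1)`, `2 ↦ (1,1)`). -/
def DfoldC (s : ℕ) (c : Fin (s - 1) → Fin 3)
    (f : MvPolynomial (ℕ ⊕ ℕ) (Polynomial ℚ)) : MvPolynomial (ℕ ⊕ ℕ) (Polynomial ℚ) :=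
  (List.finRange (s - 1)).foldl
    (fun g i =>
      if c i = 0 then MvPolynomial.pderiv (Sum.inl ((i : ℕ) + 1)) g
      else if c i = 1 then MvPolynomial.pderiv (Sum.inl (i : ℕ)) g
      else (Polynomial.X : Polynomial ℚ) • MvPolynomial.pderiv (Sum.inr (i : ℕ)) g) f

/-- The operator `D_w` for the element `w ∈ W_{s-1}` encoded by `α, β : ℕ → ℕ`. -/
def DfoldW (s : ℕ) (α β : ℕ → ℕ)
    (f : MvPolynomial (ℕ ⊕ ℕ) (Polynomial ℚ)) : MvPolynomial (ℕ ⊕ ℕ) (Polynomial ℚ) :=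
  (List.range (s - 1)).foldl
    (fun g j =>
      if α (j + 1) = 1 ∧ β (j + 1) = 1 then
        (Polynomial.X : Polynomial ℚ) • MvPolynomial.pderiv (Sum.inr j) g
      else if α (j + 1) = 1 then MvPolynomial.pderiv (Sum.inl (j + 1)) g
      else MvPolynomial.pderiv (Sum.inl j) g) f

/-- Substitution of `0` for all the variables `y_j = Sum.inr j`. -/
def setYzero :
    MvPolynomial (ℕ ⊕ ℕ) (Polynomial ℚ) →ₐ[Polynomial ℚ] MvPolynomial (ℕ ⊕ ℕ) (Polynomial ℚ) :=
  MvPolynomial.aeval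
    (Sum.elim (fun i => MvPolynomial.X (Sum.inl i)) fun _ => (0 : MvPolynomial (ℕ ⊕ ℕ) (Polynomial ℚ)))
end

/-- Partial sums are monotone. -/
theorem nseq_mono (k : ℕ → ℕ) : Monotone (nseq k) := by
  apply monotone_nat_of_le_succ
  intro i
  unfold nseq
  rw [Finset.sum_range_succ]
  omega

/-- Every positive `a ≤ n_s` lies in a block. -/
theorem exists_block (k : ℕ → ℕ) (a : ℕ) (ha : 1 ≤ a) :
    ∀ s, a ≤ nseq k s → ∃ i < s, nseq k i < a ∧ a ≤ nseq k (i + 1) := by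
  intro s
  induction s with
  | zero => intro h; simp [nseq] at h; omega
  | succ s ih =>
    intro h
    by_cases h' : a ≤ nseq k s
    · obtain ⟨i, hi, h1⟩ := ih h'
      exact ⟨i, by omega, h1⟩
    · exact ⟨s, by omega, by omega, h⟩

theorem terminal_sum (s : ℕ) (k : ℕ → ℕ) (v : ℕ × ℕ) (hv : v ∈ terminals s k) :
    v.1 + v.2 = nseq k s := by
  obtain ⟨i, hi, rfl⟩ := hv
  have := nseq_mono k hi
  simp only
  omega

theorem lam_step (s : ℕ) (k : ℕ → ℕ) (lam : ℕ → ℝ) (hlam : HasBlockStructure s k lam)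
    (a b : ℕ) (ha : 1 ≤ a) (hb : 1 ≤ b) (hab : a + b = nseq k s) :
    lam (a + 1) ≤ lam a ∧ (lam (a + 1) < lam a ↔ (a, b) ∈ terminals s k) := by
  obtain ⟨i, hi, h1, h2⟩ := exists_block k a ha s (by omega)
  rcases Nat.lt_or_ge a (nseq k (i + 1)) with h3 | h3
  · have he := hlam.1 i hi a (a + 1) h1 (by omega) h3
    refine ⟨he.ge, ?_⟩
    constructor
    · intro h; rw [he] at h; exact absurd h (lt_irrefl _)
    · rintro ⟨j, hj, hj'⟩
      have hj1 : a = nseq k j := congrArg Prod.fst hj'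
      rcases Nat.lt_or_ge i j with h | h
      · have := nseq_mono k (show i + 1 ≤ j from h)
        omega
      · have := nseq_mono k h
        omega
  · have he : a = nseq k (i + 1) := le_antisymm h2 h3
    have his : i + 1 < s := by
      by_contra hc
      have := nseq_mono k (show s ≤ i + 1 by omega)
      omega
    have hlt := hlam.2 (i + 1) (by omega) his
    rw [← he] at hlt
    refine ⟨hlt.le, fun _ => ?_, fun _ => hlt⟩
    refine ⟨i + 1, his.le, ?_⟩
    rw [Prod.mk.injEq]
    omega

theorem face_in (s : ℕ) (k : ℕ → ℕ) (γ : LGraph) (hγ : IsLadderFace s k γ)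
    (a b : ℕ) (ha : 1 ≤ a) (hb : 1 ≤ b) :
    (a, b) ∈ γ.V ↔ (((a - 1, b), (a, b)) ∈ γ.E ∨ ((a, b - 1), (a, b)) ∈ γ.E) := by
  obtain ⟨-, P, hP, hV, hE⟩ := hγ
  rw [hV, hE]
  simp only [Set.mem_iUnion, exists_prop]
  constructor
  · rintro ⟨p, hp, hv⟩
    obtain ⟨m, f, h0, -, hs, -, hpV, hpE⟩ := hP p hp
    rw [hpV] at hv
    obtain ⟨t, ht, he⟩ := hv
    cases t with
    | zero =>
      rw [h0, Prod.mk.injEq] at he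
      omega
    | succ t =>
      have hst := hs t (by omega)
      have hin : (f t, f (t + 1)) ∈ p.E := by
        rw [hpE]; exact ⟨t, by omega, rfl⟩
      rw [← he] at hst hin
      rcases hst with h | h <;> rw [Prod.mk.injEq] at h
      · left
        have : f t = (a - 1, b) := Prod.ext (by simp only; omega) (by simp only; omega)
        rw [this] at hin
        exact ⟨p, hp, hin⟩
      · right
        have : f t = (a, b - 1) := Prod.ext (by simp only; omega) (by simp only; omega)
        rw [this] at hin
        exact ⟨p, hp, hin⟩
  · rintro (⟨p, hp, he⟩ | ⟨p, hp, he⟩) <;>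
    · obtain ⟨m, f, h0, -, hs, -, hpV, hpE⟩ := hP p hp
      rw [hpE] at he
      obtain ⟨t, ht, he⟩ := he
      refine ⟨p, hp, ?_⟩
      rw [hpV]
      exact ⟨t + 1, ht, congrArg Prod.snd he⟩

theorem face_out (s : ℕ) (k : ℕ → ℕ) (γ : LGraph) (hγ : IsLadderFace s k γ)
    (a b : ℕ) (hab : a + b < nseq k s) :
    (a, b) ∈ γ.V ↔ (((a, b), (a + 1, b)) ∈ γ.E ∨ ((a, b), (a, b + 1)) ∈ γ.E) := by
  obtain ⟨-, P, hP, hV, hE⟩ := hγ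
  rw [hV, hE]
  simp only [Set.mem_iUnion, exists_prop]
  constructor
  · rintro ⟨p, hp, hv⟩
    obtain ⟨m, f, -, hm, hs, -, hpV, hpE⟩ := hP p hp
    rw [hpV] at hv
    obtain ⟨t, ht, he⟩ := hv
    have htm : t < m := by
      rcases Nat.lt_or_ge t m with h | h
      · exact h
      · have : t = m := le_antisymm ht h
        subst this
        have := terminal_sum s k _ hm
        rw [← he] at this
        simp only at this
        omega
    have hst := hs t htm
    have hin : (f t, f (t + 1)) ∈ p.E := by
      rw [hpE]; exact ⟨t, htm, rfl⟩
    rw [← he] at hst hin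
    rcases hst with h | h <;> rw [h] at hin
    · exact Or.inl ⟨p, hp, hin⟩
    · exact Or.inr ⟨p, hp, hin⟩
  · rintro (⟨p, hp, he⟩ | ⟨p, hp, he⟩) <;>
    · obtain ⟨m, f, h0, -, hs, -, hpV, hpE⟩ := hP p hp
      rw [hpE] at he
      obtain ⟨t, ht, he⟩ := he
      refine ⟨p, hp, ?_⟩
      rw [hpV]
      exact ⟨t, ht.le, congrArg Prod.fst he⟩

theorem face_diag (s : ℕ) (k : ℕ → ℕ) (γ : LGraph) (hγ : IsLadderFace s k γ)
    (a b : ℕ) (hab : a + b = nseq k s) :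
    (a, b) ∈ γ.V ↔ (a, b) ∈ terminals s k := by
  refine ⟨fun h => ?_, fun h => hγ.1 h⟩
  obtain ⟨-, P, hP, hV, hE⟩ := hγ
  rw [hV] at h
  simp only [Set.mem_iUnion, exists_prop] at h
  obtain ⟨p, hp, hv⟩ := h
  obtain ⟨m, f, -, -, -, hl, hpV, -⟩ := hP p hp
  rw [hpV] at hv
  obtain ⟨t, ht, he⟩ := hv
  have := hl t ht
  rw [← he] at this
  obtain ⟨w, hw, h1, h2⟩ := this
  have hsum := terminal_sum s k w hw
  simp only at h1 h2
  have : (a, b) = w := Prod.ext (by simp only; omega) (by simp only; omega)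
  rw [this]
  exact hw

/-- One step: all claims at `(i,j)` follow from the comparison of the two neighbours. -/
theorem barX_step (n : ℕ) (lam : ℕ → ℝ) (E : Set ((ℕ × ℕ) × (ℕ × ℕ))) (i j : ℕ)
    (hij : i + j ≤ n)
    (h1 : barX n lam E (i + 1) j ≤ barX n lam E i (j + 1))
    (h2 : barX n lam E (i + 1) j < barX n lam E i (j + 1) ↔
      (((i - 1, j), (i, j)) ∈ E ∨ ((i, j - 1), (i, j)) ∈ E)) :
    (barX n lam E i j ≤ barX n lam E i (j + 1) ∧ barX n lam E (i + 1) j ≤ barX n lam E i j) ∧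
    (barX n lam E i j < barX n lam E i (j + 1) ↔ ((i - 1, j), (i, j)) ∈ E) ∧
    (barX n lam E (i + 1) j < barX n lam E i j ↔ ((i, j - 1), (i, j)) ∈ E) := by
  have hx : barX n lam E i j = if ((i - 1, j), (i, j)) ∈ E then
      if ((i, j - 1), (i, j)) ∈ E then
        (barX n lam E i (j + 1) + barX n lam E (i + 1) j) / 2
      else barX n lam E (i + 1) j
    else barX n lam E i (j + 1) := by
    rw [barX]
    rw [dif_neg (by omega)]
    simp only [dite_eq_ite]
  rw [hx]
  by_cases hh : ((i - 1, j), (i, j)) ∈ E <;> by_cases hv : ((i, j - 1), (i, j)) ∈ E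
  · have := h2.2 (Or.inl hh)
    simp only [hh, hv, if_true, iff_true]
    refine ⟨⟨?_, ?_⟩, ?_, ?_⟩ <;> linarith
  · have := h2.2 (Or.inl hh)
    simp only [hh, hv, if_true, if_false, iff_true, iff_false]
    refine ⟨⟨?_, ?_⟩, ?_, ?_⟩ <;> linarith
  · have := h2.2 (Or.inr hv)
    simp only [hh, hv, if_false, iff_true, iff_false]
    refine ⟨⟨?_, ?_⟩, ?_, ?_⟩ <;> linarith
  · have : ¬ (barX n lam E (i + 1) j < barX n lam E i (j + 1)) := by
      rw [h2]; tauto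
    simp only [hh, hv, if_false, iff_false]
    refine ⟨⟨?_, ?_⟩, ?_, ?_⟩ <;> linarith

theorem barX_all (s : ℕ) (k : ℕ → ℕ) (lam : ℕ → ℝ) (hlam : HasBlockStructure s k lam)
    (γ : LGraph) (hγ : IsLadderFace s k γ) (d : ℕ) :
    ∀ i j : ℕ, 1 ≤ i → 1 ≤ j → i + j + d = nseq k s →
    (barX (nseq k s) lam γ.E i j ≤ barX (nseq k s) lam γ.E i (j + 1) ∧
      barX (nseq k s) lam γ.E (i + 1) j ≤ barX (nseq k s) lam γ.E i j) ∧
    (barX (nseq k s) lam γ.E i j < barX (nseq k s) lam γ.E i (j + 1) ↔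
      ((i - 1, j), (i, j)) ∈ γ.E) ∧
    (barX (nseq k s) lam γ.E (i + 1) j < barX (nseq k s) lam γ.E i j ↔
      ((i, j - 1), (i, j)) ∈ γ.E) := by
  induction d with
  | zero =>
    intro i j hi hj hij
    have e1 : barX (nseq k s) lam γ.E i (j + 1) = lam i := by
      rw [barX, dif_pos (by omega)]
    have e2 : barX (nseq k s) lam γ.E (i + 1) j = lam (i + 1) := by
      rw [barX, dif_pos (by omega)]
    have hl := lam_step s k lam hlam i j hi hj hij
    apply barX_step _ _ _ _ _ (by omega)
    · rw [e1, e2]; exact hl.1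
    · rw [e1, e2, hl.2, ← face_diag s k γ hγ i j hij, face_in s k γ hγ i j hi hj]
  | succ d ih =>
    intro i j hi hj hij
    obtain ⟨⟨-, a1⟩, -, a2⟩ := ih i (j + 1) hi (by omega) (by omega)
    obtain ⟨⟨b1, -⟩, b2, -⟩ := ih (i + 1) j (by omega) hj (by omega)
    simp only [Nat.add_sub_cancel] at a2 b2
    apply barX_step _ _ _ _ _ (by omega)
    · exact b1.trans a1
    · rw [← face_in s k γ hγ i j hi hj, face_out s k γ hγ i j (by omega), ← a2, ← b2]
      constructor
      · intro h
        by_contra hc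
        push Not at hc
        linarith [hc.1, hc.2]
      · rintro (h | h) <;> linarith

/-- claims C1, C2 in the proof of Lemma 2.6. For a face `γ`
of the ladder diagram `Γ_k`, the recursively defined point `x̄` lies in `P_λ`,
the inequality `x̄_{i,j} < x̄_{i,j+1}` holds exactly when `((i-1,j),(i,j))` is an
edge of `γ`, and `x̄_{i,j} > x̄_{i+1,j}` holds exactly when `((i,j-1),(i,j))` is
an edge of `γ`. -/
theorem barX_mem_and_strict (s : ℕ) (hs : 1 ≤ s) (k : ℕ → ℕ) (hk : ∀ i < s, 0 < k i)
    (lam : ℕ → ℝ) (hlam : HasBlockStructure s k lam)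
    (γ : LGraph) (hγ : IsLadderFace s k γ)
    (xbar : GCIdx (nseq k s) → ℝ)
    (hxbar : ∀ p : GCIdx (nseq k s), xbar p = barX (nseq k s) lam γ.E p.1.1 p.1.2) :
    xbar ∈ GCPoly (nseq k s) lam ∧
    ∀ i j : ℕ, (i, j) ∈ GCIdx (nseq k s) →
      (gcEntry (nseq k s) lam xbar (i, j) < gcEntry (nseq k s) lam xbar (i, j + 1) ↔
        ((i - 1, j), (i, j)) ∈ γ.E) ∧
      (gcEntry (nseq k s) lam xbar (i + 1, j) < gcEntry (nseq k s) lam xbar (i, j) ↔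
        ((i, j - 1), (i, j)) ∈ γ.E) := by
  have key : ∀ i j : ℕ, 1 ≤ i → 1 ≤ j → i + j ≤ nseq k s + 1 →
      gcEntry (nseq k s) lam xbar (i, j) = barX (nseq k s) lam γ.E i j := by
    intro i j hi hj hij
    unfold gcEntry
    split_ifs with h
    · rw [hxbar]
    · have : ¬ (i + j ≤ nseq k s) := fun hc => h ⟨hi, hj, hc⟩
      rw [barX, dif_pos (by omega)]
  have main : ∀ i j : ℕ, (i, j) ∈ GCIdx (nseq k s) → _ := fun i j hij =>
    barX_all s k lam hlam γ hγ (nseq k s - (i + j)) i j hij.1 hij.2.1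
      (Nat.add_sub_cancel' hij.2.2)
  constructor
  · intro i j hij
    have hm := (main i j hij).1
    obtain ⟨hi, hj, hn⟩ := hij
    simp only at hi hj hn
    rw [key i j hi hj (by omega), key i (j + 1) hi (by omega) (by omega),
      key (i + 1) j (by omega) hj (by omega)]
    exact hm
  · intro i j hij
    have hm := (main i j hij).2
    obtain ⟨hi, hj, hn⟩ := hij
    simp only at hi hj hn
    rw [key i j hi hj (by omega), key i (j + 1) hi (by omega) (by omega),
      key (i + 1) j (by omega) hj (by omega)]
    exact hm
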